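/- arXiv:2502.06071 — 4 statements merged into one kernel-verified Lean document; each statement's English description precedes it below -/
import Mathlib

section
/- For each integer Q ≥ 2 and each real ε ∈ (0,1), there exists a constant C_ε > 0 (depending on Q and ε) such that for all positive integers n, the lazy base-exchange chain on B^{(Q)}(n) satisfies T^mix(ε) ≤ C_ε · n². -/
/-!
Coupling proof. Write `D(x, y) = ∑ k, (x_k - y_k)⁺`, which is half the `ℓ¹` distance. Two copies
of the lazy chain choose the same pair `(i, j)`; if they agree at site `i` or at site `j` they use
the same laziness coin, and otherwise opposite coins, so that exactly one of them attempts the move.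

For every fixed pair `(i, j)`, the mean of `D` over the coin does not increase. With a common coin
`D` is unchanged (`dist1_both`). With opposite coins the change of `D` caused by moving `x` is
`[x_j > y_j] - [x_i > y_i]`, the one caused by moving `y` is the opposite, and if one of the moves
is blocked by an empty site the other one does not increase `D` (`dist1_alt`). Moreover, if `x ≠ y`
there are sites with `x_i > y_i` and `x_j < y_j`, and moving `x` from `i` to `j` lowers `D` by one.

Since `0 ≤ D ≤ n`, the concave function `D (2n + 1 - D)` therefore decreases by at least `1/(2Q²)`
on average while the copies differ (`coupOp_lyap`). Hence the expected coalescence time is at most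
`2Q² · 2n²`, and Markov's inequality (`mul_iterate_coupOp_le`) bounds the total variation distance
at time `t` by `4Q²n²/t` (`DTV_le`).

Everything is phrased with transition operators acting on functions (`lazyOp` for the chain,
`coupOp` for the coupling) instead of path measures; the iterate `coupOp^[t] neInd` is the
probability that the copies differ at time `t`.
-/

open scoped BigOperators
open Filter MeasureTheory

noncomputable section

namespace CongestionPaper

attribute [local instance 10] Classical.propDecidable

/-- Evolution of a distribution under a transition kernel `p` on a finite state space:
`evolve p mu t` is the law at time `t` of the Markov chain with transition matrix `p`
and initial distribution `mu`. -/
def evolve {X : Type*} [Fintype X] (p : X -> X -> Real) (mu : X -> Real) : Nat -> X -> Real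
  | 0 => mu
  | (t+1) => fun y => ∑ x, evolve p mu t x * p x y

/-- Point mass at `x0`. -/
def delta {X : Type*} (x0 : X) : X -> Real := fun x => if x = x0 then 1 else 0

/-- Total variation distance between two distributions on a finite type,
as the supremum over events `A` of the difference of probabilities of `A`. -/
def tvDist {X : Type*} [Fintype X] (mu nu : X -> Real) : Real :=
  ⨆ A : Finset X, |∑ x ∈ A, (mu x - nu x)|

/-- Total variation distance between the pushforwards of `mu` and `nu` under `m`. -/
def tvDistOn {X : Type*} [Fintype X] {Y : Type*} (m : X -> Y) (mu nu : X -> Real) : Real :=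
  ⨆ B : Finset Y, |∑ x : X, (if m x ∈ B then mu x - nu x else 0)|

/-- Worst-case (over the initial state) total variation distance to `pi` at time `t`. -/
def DTV {X : Type*} [Fintype X] (p : X -> X -> Real) (pi : X -> Real) (t : Nat) : Real :=
  ⨆ x0 : X, tvDist (evolve p (delta x0) t) pi

/-- Mixing time `T^mix(eps)`. -/
def Tmix {X : Type*} [Fintype X] (p : X -> X -> Real) (pi : X -> Real) (eps : Real) : Nat :=
  sInf {t : Nat | DTV p pi t ≤ eps}

/-- Probability of a given trajectory `w` of length `T` for the chain started at `x0`. -/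
def pathProb {X : Type*} [Fintype X] (p : X -> X -> Real) (x0 : X) (T : Nat)
    (w : Fin (T+1) -> X) : Real :=
  (if w 0 = x0 then 1 else 0) * ∏ t : Fin T, p (w t.castSucc) (w t.succ)

/-- Probability that some state visited up to time `T` satisfies `Bad`. -/
def hitProb {X : Type*} [Fintype X] (p : X -> X -> Real) (x0 : X) (T : Nat)
    (Bad : X -> Prop) : Real :=
  ∑ w : Fin (T+1) -> X, (if ∃ t, Bad (w t) then pathProb p x0 T w else 0)

/-! ### The load profile chain -/

/-- Load profiles: `xi : S -> {0,...,kappa}` with `∑ xi v = n`, where `S = Fin Q`. -/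
abbrev LoadState (Q kap n : Nat) := {xi : Fin Q -> Fin (kap+1) // (∑ v, ((xi v : Nat))) = n}

/-- Transition matrix of the load profile chain on `Xi_{n,S,kappa}`. -/
def loadP (Q kap n : Nat) (xi xi' : LoadState Q kap n) : Real :=
  if xi' = xi then
    (∑ v, ((xi.1 v : Nat) : Real) * (((1 + kap - (xi.1 v : Nat) : Nat)) : Real))
      / ((n : Real) * ((1 + kap * Q - n : Nat) : Real))
  else
    (∑ vm, ∑ vp,
      if vm ≠ vp ∧ (xi'.1 vm : Nat) + 1 = (xi.1 vm : Nat) ∧ (xi'.1 vp : Nat) = (xi.1 vp : Nat) + 1 ∧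
          (∀ v, v ≠ vm -> v ≠ vp -> xi'.1 v = xi.1 v)
        then ((xi.1 vm : Nat) : Real) * (((kap - (xi.1 vp : Nat) : Nat)) : Real) else 0)
      / ((n : Real) * ((1 + kap * Q - n : Nat) : Real))

/-- Stationary weight `∏_v 1/(xi_v! (kappa - xi_v)!)`. -/
def loadWeight (Q kap n : Nat) (xi : LoadState Q kap n) : Real :=
  ∏ v, (1 : Real) /
    ((Nat.factorial (xi.1 v : Nat) : Real) * (Nat.factorial (kap - (xi.1 v : Nat)) : Real))

/-- The stationary distribution `pi_n` of the load profile chain. -/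
def loadPi (Q kap n : Nat) (xi : LoadState Q kap n) : Real :=
  loadWeight Q kap n xi / (∑ eta : LoadState Q kap n, loadWeight Q kap n eta)

/-- `xi ∈ Xi(delta)`: the normalized load profile is within Euclidean distance `delta`
of the constant vector `(rho/Q)_v`. -/
def loadNear (Q kap n : Nat) (rho : Real) (xi : LoadState Q kap n) (del : Real) : Prop :=
  Real.sqrt (∑ v, (((xi.1 v : Nat) : Real) / ((kap * Q : Nat) : Real) - rho / (Q : Real))^2) ≤ del

/-- `D(xi, xi') = (1/2) ∑_v |xi_v - xi'_v|`. -/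
def loadD (Q kap n : Nat) (xi xi' : LoadState Q kap n) : Real :=
  (1/2) * ∑ v, |((xi.1 v : Nat) : Real) - ((xi'.1 v : Nat) : Real)|

/-! ### The congestion dynamics (Glauber dynamics) -/

/-- `xi_v(sigma)`: the number of players adopting resource `v`. -/
def xiCount {Q n : Nat} (sg : Fin n -> Fin Q) (v : Fin Q) : Nat :=
  (Finset.univ.filter fun i => sg i = v).card

/-- Configurations: `sigma : [n] -> S` with `xi_v(sigma) ≤ kappa` for every `v`. -/
abbrev ConfigState (Q kap n : Nat) := {sg : Fin n -> Fin Q // ∀ v, xiCount sg v ≤ kap}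

/-- Transition matrix of the congestion dynamics. -/
def configP (Q kap n : Nat) (sg sg' : ConfigState Q kap n) : Real :=
  if sg' = sg then
    (∑ i, ((1 + kap - xiCount sg.1 (sg.1 i) : Nat) : Real))
      / ((n : Real) * ((1 + kap * Q - n : Nat) : Real))
  else
    (∑ i, if sg'.1 i ≠ sg.1 i ∧ (∀ j, j ≠ i -> sg'.1 j = sg.1 j)
        then ((kap - xiCount sg.1 (sg'.1 i) : Nat) : Real) else 0)
      / ((n : Real) * ((1 + kap * Q - n : Nat) : Real))

/-- The potential `F(sigma) = ∑_v ∑_{s=0}^{xi_v(sigma)} (log(kappa+1) - log(kappa+1-s))`. -/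
def potF (Q kap n : Nat) (sg : ConfigState Q kap n) : Real :=
  ∑ v, ∑ s ∈ Finset.range (xiCount sg.1 v + 1),
    (Real.log ((kap : Real) + 1) - Real.log ((kap : Real) + 1 - (s : Real)))

/-- The Gibbs measure `mu_n(sigma) = e^{-F(sigma)}/Z_n`. -/
def gibbs (Q kap n : Nat) (sg : ConfigState Q kap n) : Real :=
  Real.exp (-(potF Q kap n sg)) / (∑ ta : ConfigState Q kap n, Real.exp (-(potF Q kap n ta)))

/-- `sigma ∈ S(delta)`. -/
def configNear (Q kap n : Nat) (rho : Real) (sg : ConfigState Q kap n) (del : Real) : Prop :=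
  Real.sqrt (∑ v, ((xiCount sg.1 v : Real) / ((kap * Q : Nat) : Real) - rho / (Q : Real))^2) ≤ del

/-- The load matrix `xi^{sigma0}_{u,v}(sigma)`. -/
def ximat {Q n : Nat} (sg0 sg : Fin n -> Fin Q) (u v : Fin Q) : Nat :=
  (Finset.univ.filter fun i => sg0 i = u ∧ sg i = v).card

/-- `sigma ∈ S(sigma0, delta)`: for each `u`, the normalized `u`-th row of the
load matrix is within Euclidean distance `delta` of the constant vector `(1/Q)_v`. -/
def configNearMat (Q kap n : Nat) (sg0 sg : ConfigState Q kap n) (del : Real) : Prop :=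
  ∀ u, Real.sqrt
      (∑ v, ((ximat sg0.1 sg.1 u v : Real) / (xiCount sg0.1 u : Real) - 1 / (Q : Real))^2) ≤ del

/-- `D^{sigma0}(sigma, sigma') = ∑_u (1/2) ∑_v |xi^{sigma0}_{u,v}(sigma) - xi^{sigma0}_{u,v}(sigma')|`. -/
def matD (Q kap n : Nat) (sg0 sg sg' : ConfigState Q kap n) : Real :=
  ∑ u, (1/2) * ∑ v, |(ximat sg0.1 sg.1 u v : Real) - (ximat sg0.1 sg'.1 u v : Real)|

/-- The constant `cStar = (sqrt Q/(1-rho) + rho/(2Q))^{1/2}`. -/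
def cStar (Q : Nat) (rho : Real) : Real :=
  Real.sqrt (Real.sqrt (Q : Real) / (1 - rho) + rho / (2 * (Q : Real)))

/-! ### The base-exchange chain on `B^(Q)(n)` -/

/-- `B^(Q)(n) = {x ∈ Z_{≥0}^Q : ∑ x_i = n}`. -/
abbrev BState (Q n : Nat) := {x : Fin Q -> Fin (n+1) // (∑ i, ((x i : Nat))) = n}

/-- Transition matrix of the base-exchange chain on `B^(Q)(n)`. -/
def baseP (Q n : Nat) (x y : BState Q n) : Real :=
  if y = x then
    ∑ i, (if 0 < (x.1 i : Nat) then (1 : Real) / ((Q : Real) * (Q : Real)) else (1 : Real) / (Q : Real))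
  else
    ∑ i, ∑ j,
      if i ≠ j ∧ (y.1 i : Nat) + 1 = (x.1 i : Nat) ∧ (y.1 j : Nat) = (x.1 j : Nat) + 1 ∧
          (∀ v, v ≠ i -> v ≠ j -> y.1 v = x.1 v)
        then (1 : Real) / ((Q : Real) * (Q : Real)) else 0

/-- The lazy version of the base-exchange chain. -/
def lazyBaseP (Q n : Nat) (x y : BState Q n) : Real :=
  (1/2) * (if y = x then 1 else 0) + (1/2) * baseP Q n x y

/-- The uniform distribution on `B^(Q)(n)`. -/
def unifB (Q n : Nat) (x : BState Q n) : Real := 1 / (Fintype.card (BState Q n) : Real)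


/-! ### Single moves and the two averaging operators -/

/-- The occupation of site `k` after moving one unit of mass from site `i` to site `j`. -/
def moveVal {Q n : Nat} (i j : Fin Q) (x : BState Q n) (k : Fin Q) : Nat :=
  if k = i then (x.1 i : Nat) - 1 else if k = j then (x.1 j : Nat) + 1 else (x.1 k : Nat)

lemma sum_moveVal {Q n : Nat} (i j : Fin Q) (x : BState Q n)
    (h : 0 < (x.1 i : Nat) ∧ i ≠ j) : ∑ k, moveVal i j x k = n := by
  have h1 : ∑ k, (moveVal i j x k + if k = i then 1 else 0)
      = ∑ k, ((x.1 k : Nat) + if k = j then 1 else 0) := by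
    refine Finset.sum_congr rfl fun k _ => ?_
    unfold moveVal
    obtain ⟨h0, hij⟩ := h
    by_cases hi : k = i
    · subst hi
      simp only [if_true, if_neg hij]
      omega
    · by_cases hj : k = j
      · subst hj; simp [hi]
      · simp [hi, hj]
  rw [Finset.sum_add_distrib, Finset.sum_add_distrib, x.2] at h1
  simpa using h1

/-- The state `x - e_i + e_j` when it is admissible (`x_i > 0`), and `x` otherwise. -/
def move {Q n : Nat} (i j : Fin Q) (x : BState Q n) : BState Q n :=
  if h : 0 < (x.1 i : Nat) ∧ i ≠ j then
    ⟨fun k => ⟨moveVal i j x k, by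
      have := Finset.single_le_sum (f := moveVal i j x) (fun _ _ => Nat.zero_le _)
        (Finset.mem_univ k)
      rw [sum_moveVal i j x h] at this
      omega⟩, sum_moveVal i j x h⟩
  else x

lemma move_pos {Q n : Nat} {i j : Fin Q} {x : BState Q n} (h0 : 0 < (x.1 i : Nat)) (hij : i ≠ j) :
    ((move i j x).1 i : Nat) + 1 = (x.1 i : Nat) ∧ ((move i j x).1 j : Nat) = (x.1 j : Nat) + 1 ∧
      ∀ k, k ≠ i → k ≠ j → (move i j x).1 k = x.1 k := by
  have h : 0 < (x.1 i : Nat) ∧ i ≠ j := ⟨h0, hij⟩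
  unfold move
  rw [dif_pos h]
  refine ⟨?_, ?_, ?_⟩
  · simp only [moveVal, if_true]; omega
  · simp [moveVal, hij.symm]
  · intro k hi hj
    apply Fin.ext
    simp [moveVal, hi, hj]

lemma move_zero {Q n : Nat} {i j : Fin Q} {x : BState Q n} (h0 : (x.1 i : Nat) = 0) :
    move i j x = x := by
  unfold move
  rw [dif_neg (by omega)]

lemma move_self {Q n : Nat} (i : Fin Q) (x : BState Q n) : move i i x = x := by
  unfold move
  rw [dif_neg (by simp)]

lemma eq_move_iff {Q n : Nat} {x y : BState Q n} (hxy : y ≠ x) (i j : Fin Q) :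
    (i ≠ j ∧ (y.1 i : Nat) + 1 = (x.1 i : Nat) ∧ (y.1 j : Nat) = (x.1 j : Nat) + 1 ∧
      (∀ v, v ≠ i → v ≠ j → y.1 v = x.1 v)) ↔ y = move i j x := by
  constructor
  · rintro ⟨hij, h1, h2, h3⟩
    obtain ⟨m1, m2, m3⟩ := move_pos (x := x) (i := i) (j := j) (by omega) hij
    apply Subtype.ext
    funext k
    by_cases hi : k = i
    · subst hi; apply Fin.ext; omega
    by_cases hj : k = j
    · subst hj; apply Fin.ext; omega
    rw [h3 k hi hj, m3 k hi hj]
  · intro h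
    have hij : i ≠ j := by
      rintro rfl
      exact hxy (h.trans (move_self i x))
    have h0 : 0 < (x.1 i : Nat) := by
      rcases Nat.eq_zero_or_pos (x.1 i : Nat) with h0 | h0
      · exact absurd (h.trans (move_zero h0)) hxy
      · exact h0
    rw [h]
    exact ⟨hij, move_pos h0 hij⟩

lemma baseP_eq {Q n : Nat} (hQ : 0 < Q) (x y : BState Q n) :
    baseP Q n x y = ∑ i, ∑ j, if y = move i j x then (1 : Real) / ((Q : Real) * (Q : Real)) else 0 := by
  unfold baseP
  split_ifs with hxy
  · subst hxy
    refine Finset.sum_congr rfl fun i _ => ?_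
    split_ifs with h0
    · rw [Finset.sum_eq_single i]
      · simp [move_self]
      · intro j _ hj
        rw [if_neg]
        intro h
        have := (move_pos h0 hj.symm).1
        rw [← h] at this
        omega
      · simp
    · have hz : (y.1 i : Nat) = 0 := by omega
      simp only [move_zero hz, if_true, Finset.sum_const, Finset.card_univ, Fintype.card_fin,
        nsmul_eq_mul]
      have : (Q : ℝ) ≠ 0 := by positivity
      field_simp
  · refine Finset.sum_congr rfl fun i _ => Finset.sum_congr rfl fun j _ => ?_
    simp only [eq_move_iff hxy i j]

/-- The lazy base-exchange transition operator on functions, written as an average over the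
chosen pair `(i, j)` and the laziness coin. -/
def lazyOp {Q n : Nat} (f : BState Q n → ℝ) (x : BState Q n) : ℝ :=
  (∑ i, ∑ j, (f x + f (move i j x)) / 2) / ((Q : ℝ) * (Q : ℝ))

lemma sum_lazyBaseP {Q n : Nat} (hQ : 0 < Q) (f : BState Q n → ℝ) (x : BState Q n) :
    ∑ y, lazyBaseP Q n x y * f y = lazyOp f x := by
  have hQ' : (Q : ℝ) ≠ 0 := by positivity
  have h1 : ∑ y, baseP Q n x y * f y = (∑ i, ∑ j, f (move i j x)) / ((Q : ℝ) * Q) := by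
    simp only [baseP_eq hQ, Finset.sum_mul, Finset.sum_div]
    rw [Finset.sum_comm]
    refine Finset.sum_congr rfl fun i _ => ?_
    rw [Finset.sum_comm]
    refine Finset.sum_congr rfl fun j _ => ?_
    simp only [ite_mul, zero_mul, Finset.sum_ite_eq', Finset.mem_univ, if_true]
    ring
  have h2 : ∑ y, lazyBaseP Q n x y * f y = (1/2) * f x + (1/2) * ∑ y, baseP Q n x y * f y := by
    simp only [lazyBaseP, add_mul, Finset.sum_add_distrib, Finset.mul_sum]
    congr 1
    · simp
    · exact Finset.sum_congr rfl fun y _ => by ring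
  rw [h2, h1]
  unfold lazyOp
  simp only [← Finset.sum_div, Finset.sum_add_distrib, Finset.sum_const, Finset.card_univ,
    Fintype.card_fin, nsmul_eq_mul]
  field_simp

lemma baseP_symm {Q n : Nat} (x y : BState Q n) (hxy : y ≠ x) :
    baseP Q n x y = baseP Q n y x := by
  unfold baseP
  rw [if_neg hxy, if_neg hxy.symm, Finset.sum_comm]
  refine Finset.sum_congr rfl fun i _ => Finset.sum_congr rfl fun j _ => ?_
  congr 1
  apply propext
  constructor
  · rintro ⟨a, b, c, d⟩
    exact ⟨a.symm, c.symm, b.symm, fun v h1 h2 => (d v h2 h1).symm⟩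
  · rintro ⟨a, b, c, d⟩
    exact ⟨a.symm, c.symm, b.symm, fun v h1 h2 => (d v h2 h1).symm⟩

lemma lazyBaseP_symm {Q n : Nat} (x y : BState Q n) :
    lazyBaseP Q n x y = lazyBaseP Q n y x := by
  by_cases hxy : y = x
  · subst hxy; rfl
  · unfold lazyBaseP
    rw [baseP_symm x y hxy, if_neg hxy, if_neg (Ne.symm hxy)]

/-- The uniform distribution is stationary, because the transition matrix is symmetric and
stochastic. -/
lemma sum_lazyOp {Q n : Nat} (hQ : 0 < Q) (f : BState Q n → ℝ) :
    ∑ x, lazyOp f x = ∑ x, f x := by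
  have hQ' : (Q : ℝ) ≠ 0 := by positivity
  simp only [← sum_lazyBaseP hQ]
  rw [Finset.sum_comm]
  refine Finset.sum_congr rfl fun y _ => ?_
  have h := sum_lazyBaseP hQ (fun _ : BState Q n => (1 : ℝ)) y
  have h1 : lazyOp (fun _ : BState Q n => (1 : ℝ)) y = 1 := by
    simp only [lazyOp, Finset.sum_const, Finset.card_univ, Fintype.card_fin, nsmul_eq_mul]
    field_simp
    norm_num
  rw [h1] at h
  simp only [mul_one] at h
  rw [← Finset.sum_mul]
  simp only [lazyBaseP_symm _ y, h, one_mul]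

lemma sum_iterate_lazyOp {Q n : Nat} (hQ : 0 < Q) (f : BState Q n → ℝ) (t : ℕ) :
    ∑ x, (lazyOp^[t] f) x = ∑ x, f x := by
  induction t with
  | zero => rfl
  | succ t ih => rw [Function.iterate_succ_apply', sum_lazyOp hQ, ih]

lemma sum_evolve {Q n : Nat} (hQ : 0 < Q) (mu f : BState Q n → ℝ) (t : ℕ) :
    ∑ y, evolve (lazyBaseP Q n) mu t y * f y = ∑ x, mu x * (lazyOp^[t] f) x := by
  induction t generalizing f with
  | zero => rfl
  | succ t ih =>
    rw [Function.iterate_succ_apply, ← ih]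
    simp only [evolve, Finset.sum_mul]
    rw [Finset.sum_comm]
    refine Finset.sum_congr rfl fun x _ => ?_
    rw [← sum_lazyBaseP hQ, Finset.mul_sum]
    exact Finset.sum_congr rfl fun y _ => by ring

/-- The coupled step for a given pair `(i, j)`, averaged over the laziness coin. Both copies use
the same coin if they agree at `i` or at `j`, and opposite coins otherwise. -/
def pairStep {Q n : Nat} (i j : Fin Q) (g : BState Q n → BState Q n → ℝ) (x y : BState Q n) : ℝ :=
  if x.1 i = y.1 i ∨ x.1 j = y.1 j then (g x y + g (move i j x) (move i j y)) / 2
  else (g (move i j x) y + g x (move i j y)) / 2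

/-- The transition operator of the coupling. -/
def coupOp {Q n : Nat} (g : BState Q n → BState Q n → ℝ) (x y : BState Q n) : ℝ :=
  (∑ i, ∑ j, pairStep i j g x y) / ((Q : ℝ) * (Q : ℝ))

lemma coupOp_mono {Q n : Nat} {g h : BState Q n → BState Q n → ℝ} (hgh : ∀ x y, g x y ≤ h x y)
    (x y : BState Q n) : coupOp g x y ≤ coupOp h x y := by
  unfold coupOp
  refine div_le_div_of_nonneg_right ?_ (by positivity)
  refine Finset.sum_le_sum fun i _ => Finset.sum_le_sum fun j _ => ?_
  unfold pairStep
  split_ifs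
  · linarith [hgh x y, hgh (move i j x) (move i j y)]
  · linarith [hgh (move i j x) y, hgh x (move i j y)]

lemma coupOp_smul {Q n : Nat} (a : ℝ) (g : BState Q n → BState Q n → ℝ) (x y : BState Q n) :
    coupOp (fun x y => a * g x y) x y = a * coupOp g x y := by
  unfold coupOp
  rw [← mul_div_assoc]
  simp only [Finset.mul_sum]
  congr 1
  refine Finset.sum_congr rfl fun i _ => Finset.sum_congr rfl fun j _ => ?_
  unfold pairStep
  split_ifs <;> ring

/-- `coupOp` couples two copies of `lazyOp`: bounds on differences propagate. -/
lemma abs_lazyOp_sub_le {Q n : Nat} {f : BState Q n → ℝ} {g : BState Q n → BState Q n → ℝ}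
    (h : ∀ x y, |f x - f y| ≤ g x y) (x y : BState Q n) :
    |lazyOp f x - lazyOp f y| ≤ coupOp g x y := by
  unfold lazyOp coupOp
  rw [← sub_div, abs_div, abs_of_nonneg (by positivity : (0 : ℝ) ≤ (Q : ℝ) * Q)]
  refine div_le_div_of_nonneg_right ?_ (by positivity)
  rw [← Finset.sum_sub_distrib]
  refine (Finset.abs_sum_le_sum_abs _ _).trans (Finset.sum_le_sum fun i _ => ?_)
  rw [← Finset.sum_sub_distrib]
  refine (Finset.abs_sum_le_sum_abs _ _).trans (Finset.sum_le_sum fun j _ => ?_)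
  unfold pairStep
  split_ifs
  · have h1 := abs_le.1 (h x y)
    have h2 := abs_le.1 (h (move i j x) (move i j y))
    rw [abs_le]
    constructor <;> linarith [h1.1, h1.2, h2.1, h2.2]
  · have h1 := abs_le.1 (h (move i j x) y)
    have h2 := abs_le.1 (h x (move i j y))
    rw [abs_le]
    constructor <;> linarith [h1.1, h1.2, h2.1, h2.2]

/-! ### Distance and drift -/

/-- Half the `ℓ¹` distance, written as the sum of the positive parts of `x - y`: the subtraction
is the truncated one. -/
def dist1 {Q n : Nat} (x y : BState Q n) : ℤ := ∑ k, (((x.1 k : Nat) - (y.1 k : Nat) : Nat) : ℤ)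

lemma dist1_nonneg {Q n : Nat} (x y : BState Q n) : 0 ≤ dist1 x y :=
  Finset.sum_nonneg fun _ _ => Int.natCast_nonneg _

lemma dist1_le {Q n : Nat} (x y : BState Q n) : dist1 x y ≤ n := by
  unfold dist1
  rw [← Nat.cast_sum]
  conv_rhs => rw [← x.2]
  exact_mod_cast Finset.sum_le_sum fun k _ => Nat.sub_le _ _

lemma dist1_self {Q n : Nat} (x : BState Q n) : dist1 x x = 0 := by
  simp [dist1]

/-- Two distinct states differ in both directions, since they have equal sums. -/
lemma exists_lt_of_ne {Q n : Nat} {x y : BState Q n} (h : x ≠ y) :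
    ∃ i, (y.1 i : Nat) < (x.1 i : Nat) := by
  by_contra! hc
  apply h
  have := (Finset.sum_eq_sum_iff_of_le (s := Finset.univ) (fun i _ => hc i)).1 (x.2.trans y.2.symm)
  apply Subtype.ext
  funext i
  exact Fin.ext (this i (Finset.mem_univ i))

lemma sum_change {Q : Nat} {u v : Fin Q → ℤ} {i j : Fin Q} (hij : i ≠ j)
    (h : ∀ k, k ≠ i → k ≠ j → v k = u k) :
    ∑ k, v k = ∑ k, u k + (v i - u i) + (v j - u j) := by
  have h1 : ∑ k, (v k - u k) = ∑ k ∈ ({i, j} : Finset (Fin Q)), (v k - u k) := by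
    symm
    apply Finset.sum_subset (Finset.subset_univ _)
    intro k _ hk
    simp only [Finset.mem_insert, Finset.mem_singleton, not_or] at hk
    rw [h k hk.1 hk.2, sub_self]
  rw [Finset.sum_sub_distrib, Finset.sum_pair hij] at h1
  linarith

lemma dist1_change {Q n : Nat} {x y x' y' : BState Q n} {i j : Fin Q} (hij : i ≠ j)
    (h : ∀ k, k ≠ i → k ≠ j → x'.1 k = x.1 k ∧ y'.1 k = y.1 k) :
    dist1 x' y' = dist1 x y
      + ((((x'.1 i : Nat) - (y'.1 i : Nat) : Nat) : ℤ) - (((x.1 i : Nat) - (y.1 i : Nat) : Nat) : ℤ))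
      + ((((x'.1 j : Nat) - (y'.1 j : Nat) : Nat) : ℤ)
        - (((x.1 j : Nat) - (y.1 j : Nat) : Nat) : ℤ)) := by
  unfold dist1
  refine sum_change hij fun k hi hj => ?_
  rw [(h k hi hj).1, (h k hi hj).2]

lemma move_off {Q n : Nat} (i j : Fin Q) (x : BState Q n) (k : Fin Q) (hi : k ≠ i) (hj : k ≠ j) :
    (move i j x).1 k = x.1 k := by
  by_cases hij : i = j
  · subst hij; rw [move_self]
  rcases Nat.eq_zero_or_pos (x.1 i : Nat) with h0 | h0
  · rw [move_zero h0]
  · exact (move_pos h0 hij).2.2 k hi hj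

/-- The two coordinates of `move i j x` that may change, in a form suited to linear arithmetic. -/
lemma move_cases {Q n : Nat} {i j : Fin Q} (hij : i ≠ j) (x : BState Q n) :
    (((x.1 i : Nat) = 0 ∧ ((move i j x).1 i : Nat) = 0) ∧
        ((move i j x).1 j : Nat) = (x.1 j : Nat)) ∨
      (((move i j x).1 i : Nat) + 1 = (x.1 i : Nat) ∧
        ((move i j x).1 j : Nat) = (x.1 j : Nat) + 1) := by
  rcases Nat.eq_zero_or_pos (x.1 i : Nat) with h0 | h0
  · left; rw [move_zero h0]; exact ⟨⟨h0, h0⟩, rfl⟩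
  · right; exact ⟨(move_pos h0 hij).1, (move_pos h0 hij).2.1⟩

/-- With a common coin (the copies agree at `i` or `j`) the distance is unchanged. -/
lemma dist1_both {Q n : Nat} (i j : Fin Q) (x y : BState Q n)
    (h : x.1 i = y.1 i ∨ x.1 j = y.1 j) :
    dist1 (move i j x) (move i j y) = dist1 x y := by
  by_cases hij : i = j
  · subst hij; simp [move_self]
  rw [dist1_change (x := x) (y := y) hij
    fun k hi hj => ⟨move_off i j x k hi hj, move_off i j y k hi hj⟩]
  simp only [Fin.ext_iff] at h
  have hx := move_cases hij x
  have hy := move_cases hij y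
  omega

/-- With opposite coins the distance does not increase on average. -/
lemma dist1_alt {Q n : Nat} (i j : Fin Q) (x y : BState Q n)
    (h : ¬(x.1 i = y.1 i ∨ x.1 j = y.1 j)) :
    dist1 (move i j x) y + dist1 x (move i j y) ≤ 2 * dist1 x y := by
  by_cases hij : i = j
  · subst hij; simp only [move_self]; omega
  rw [dist1_change (x := x) (y := y) (x' := move i j x) hij
    fun k hi hj => ⟨move_off i j x k hi hj, rfl⟩,
    dist1_change (x := x) (y := y) (x' := x) hij
    fun k hi hj => ⟨rfl, move_off i j y k hi hj⟩]
  simp only [Fin.ext_iff] at h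
  have hx := move_cases hij x
  have hy := move_cases hij y
  omega

lemma dist1_dec {Q n : Nat} {i j : Fin Q} {x y : BState Q n}
    (hi : (y.1 i : Nat) < (x.1 i : Nat)) (hj : (x.1 j : Nat) < (y.1 j : Nat)) :
    dist1 (move i j x) y = dist1 x y - 1 := by
  have hij : i ≠ j := by rintro rfl; omega
  rw [dist1_change (x := x) (y := y) (x' := move i j x) hij
    fun k hi hj => ⟨move_off i j x k hi hj, rfl⟩]
  have hx := move_cases hij x
  omega

/-- The concave Lyapunov function `D (2n + 1 - D)` of the distance `D`. It is increasing on the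
range `[0, n]` of `D`, and its concavity turns the fluctuations of `D` into negative drift. -/
def lyap {Q n : Nat} (x y : BState Q n) : ℝ :=
  (dist1 x y : ℝ) * (2 * n + 1 - (dist1 x y : ℝ))

lemma lyap_nonneg {Q n : Nat} (x y : BState Q n) : 0 ≤ lyap x y := by
  have h1 : (0 : ℝ) ≤ dist1 x y := by exact_mod_cast dist1_nonneg x y
  have h2 : (dist1 x y : ℝ) ≤ n := by exact_mod_cast dist1_le x y
  exact mul_nonneg h1 (by linarith [(Nat.cast_nonneg n : (0 : ℝ) ≤ n)])

lemma lyap_le {Q n : Nat} (hn : 0 < n) (x y : BState Q n) : lyap x y ≤ 2 * (n : ℝ) ^ 2 := by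
  have h2 : (dist1 x y : ℝ) ≤ n := by exact_mod_cast dist1_le x y
  have h3 : (1 : ℝ) ≤ n := by exact_mod_cast hn
  unfold lyap
  nlinarith

lemma pairStep_lyap_le {Q n : Nat} (i j : Fin Q) (x y : BState Q n) :
    pairStep i j lyap x y ≤ lyap x y := by
  unfold pairStep
  split_ifs with h
  · have : lyap (move i j x) (move i j y) = lyap x y := by
      unfold lyap; rw [dist1_both i j x y h]
    linarith
  · have h1 : (dist1 (move i j x) y : ℝ) + dist1 x (move i j y) ≤ 2 * dist1 x y := by
      exact_mod_cast dist1_alt i j x y h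
    have h2 : (dist1 x y : ℝ) ≤ n := by exact_mod_cast dist1_le x y
    unfold lyap
    nlinarith [sq_nonneg ((dist1 (move i j x) y : ℝ) - dist1 x y),
      sq_nonneg ((dist1 x (move i j y) : ℝ) - dist1 x y),
      mul_nonneg (sub_nonneg.2 h1) (sub_nonneg.2 h2)]

lemma pairStep_lyap_dec {Q n : Nat} {i j : Fin Q} {x y : BState Q n}
    (hi : (y.1 i : Nat) < (x.1 i : Nat)) (hj : (x.1 j : Nat) < (y.1 j : Nat)) :
    pairStep i j lyap x y ≤ lyap x y - 1 / 2 := by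
  have h : ¬(x.1 i = y.1 i ∨ x.1 j = y.1 j) := by simp only [Fin.ext_iff]; omega
  unfold pairStep
  rw [if_neg h]
  have h1 : (dist1 (move i j x) y : ℝ) + dist1 x (move i j y) ≤ 2 * dist1 x y := by
    exact_mod_cast dist1_alt i j x y h
  have h2 : (dist1 x y : ℝ) ≤ n := by exact_mod_cast dist1_le x y
  have h3 : (dist1 (move i j x) y : ℝ) = dist1 x y - 1 := by exact_mod_cast dist1_dec hi hj
  unfold lyap
  rw [h3] at h1 ⊢
  nlinarith [sq_nonneg ((dist1 x (move i j y) : ℝ) - dist1 x y),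
    mul_nonneg (sub_nonneg.2 h1) (sub_nonneg.2 h2)]

/-- The indicator of `x ≠ y`. -/
def neInd {Q n : Nat} (x y : BState Q n) : ℝ := if x = y then 0 else 1

lemma neInd_le_one {Q n : Nat} (x y : BState Q n) : neInd x y ≤ 1 := by
  unfold neInd; split_ifs <;> norm_num

lemma coupOp_neInd_le {Q n : Nat} (hQ : 0 < Q) (x y : BState Q n) :
    coupOp neInd x y ≤ neInd x y := by
  have hQ' : (0 : ℝ) < Q := by positivity
  by_cases hxy : x = y
  · subst hxy
    simp [coupOp, pairStep, neInd]
  · have h1 : neInd x y = 1 := by simp [neInd, hxy]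
    rw [h1]
    unfold coupOp
    rw [div_le_one (by positivity)]
    calc ∑ i, ∑ j, pairStep i j neInd x y ≤ ∑ i : Fin Q, ∑ j : Fin Q, (1 : ℝ) := by
          refine Finset.sum_le_sum fun i _ => Finset.sum_le_sum fun j _ => ?_
          unfold pairStep
          split_ifs
          · linarith [neInd_le_one x y, neInd_le_one (move i j x) (move i j y)]
          · linarith [neInd_le_one (move i j x) y, neInd_le_one x (move i j y)]
      _ = (Q : ℝ) * Q := by simp

/-- While the copies differ, the Lyapunov function has drift at most `-1/(2Q²)`. -/
lemma coupOp_lyap {Q n : Nat} (hQ : 0 < Q) (x y : BState Q n) :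
    neInd x y + 2 * (Q : ℝ) ^ 2 * coupOp lyap x y ≤ 2 * (Q : ℝ) ^ 2 * lyap x y := by
  have hQ' : (0 : ℝ) < Q := by positivity
  have key : neInd x y / 2 ≤ ∑ i, ∑ j, (lyap x y - pairStep i j lyap x y) := by
    have hnn : ∀ i j : Fin Q, 0 ≤ lyap x y - pairStep i j lyap x y :=
      fun i j => sub_nonneg.2 (pairStep_lyap_le i j x y)
    by_cases hxy : x = y
    · simp only [neInd, if_pos hxy, zero_div]
      exact Finset.sum_nonneg fun i _ => Finset.sum_nonneg fun j _ => hnn i j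
    · obtain ⟨i, hi⟩ := exists_lt_of_ne hxy
      obtain ⟨j, hj⟩ := exists_lt_of_ne (Ne.symm hxy)
      simp only [neInd, if_neg hxy]
      calc (1 : ℝ) / 2 ≤ lyap x y - pairStep i j lyap x y := by
            linarith [pairStep_lyap_dec hi hj]
        _ ≤ ∑ j, (lyap x y - pairStep i j lyap x y) :=
            Finset.single_le_sum (f := fun j => lyap x y - pairStep i j lyap x y)
              (fun j _ => hnn i j) (Finset.mem_univ j)
        _ ≤ _ := Finset.single_le_sum (f := fun i => ∑ j, (lyap x y - pairStep i j lyap x y))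
              (fun i _ => Finset.sum_nonneg fun j _ => hnn i j) (Finset.mem_univ i)
  simp only [Finset.sum_sub_distrib, Finset.sum_const, Finset.card_univ, Fintype.card_fin,
    nsmul_eq_mul] at key
  have h2 : (Q : ℝ) ^ 2 * coupOp lyap x y = ∑ i, ∑ j, pairStep i j lyap x y := by
    unfold coupOp; field_simp
  nlinarith

/-! ### Coalescence and mixing -/

lemma iterate_coupOp_le {Q n : Nat} (hQ : 0 < Q) (t : ℕ) (x y : BState Q n) :
    (coupOp^[t] neInd) x y ≤ neInd x y := by
  induction t generalizing x y with
  | zero => exact le_rfl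
  | succ t ih =>
    rw [Function.iterate_succ_apply']
    exact (coupOp_mono ih x y).trans (coupOp_neInd_le hQ x y)

/-- Markov's inequality for the coalescence time: `t · P(X_t ≠ Y_t) ≤ 2 Q² · lyap`. -/
lemma mul_iterate_coupOp_le {Q n : Nat} (hQ : 0 < Q) (t : ℕ) (x y : BState Q n) :
    (t : ℝ) * (coupOp^[t] neInd) x y ≤ 2 * (Q : ℝ) ^ 2 * lyap x y := by
  induction t generalizing x y with
  | zero =>
    have := lyap_nonneg x y
    simp only [Nat.cast_zero, zero_mul]
    positivity
  | succ t ih =>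
    have h1 := iterate_coupOp_le hQ (t + 1) x y
    have h2 := coupOp_mono ih x y
    rw [coupOp_smul, coupOp_smul] at h2
    have h3 := coupOp_lyap hQ x y
    rw [Function.iterate_succ_apply'] at h1 ⊢
    push_cast
    linarith

lemma abs_iterate_sub_le {Q n : Nat} {f : BState Q n → ℝ} (h : ∀ x y, |f x - f y| ≤ neInd x y)
    (t : ℕ) (x y : BState Q n) :
    |(lazyOp^[t] f) x - (lazyOp^[t] f) y| ≤ (coupOp^[t] neInd) x y := by
  induction t generalizing x y with
  | zero => exact h x y
  | succ t ih =>
    rw [Function.iterate_succ_apply', Function.iterate_succ_apply']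
    exact abs_lazyOp_sub_le ih x y

lemma DTV_le {Q n : Nat} (hQ : 0 < Q) (hn : 0 < n) {t : ℕ} (ht : 0 < t) :
    DTV (lazyBaseP Q n) (unifB Q n) t ≤ 4 * (Q : ℝ) ^ 2 * (n : ℝ) ^ 2 / t := by
  have ht' : (0 : ℝ) < t := by exact_mod_cast ht
  refine Real.iSup_le (fun x => ?_) (by positivity)
  refine Real.iSup_le (fun A => ?_) (by positivity)
  set f : BState Q n → ℝ := fun z => if z ∈ A then 1 else 0 with hf
  have hosc : ∀ x y, |f x - f y| ≤ neInd x y := by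
    intro x y
    by_cases hxy : x = y
    · subst hxy; simp [neInd]
    · simp only [neInd, if_neg hxy, hf]
      split_ifs <;> norm_num
  have hN : (0 : ℝ) < Fintype.card (BState Q n) := by
    exact_mod_cast Fintype.card_pos_iff.2 ⟨x⟩
  set F := lazyOp^[t] f with hF
  have e1 : ∑ z ∈ A, evolve (lazyBaseP Q n) (delta x) t z = F x := by
    have := sum_evolve hQ (delta x) f t
    simpa [hf, delta] using this
  have e2 : ∑ z ∈ A, unifB Q n z = (∑ z, F z) / Fintype.card (BState Q n) := by
    rw [hF, sum_iterate_lazyOp hQ]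
    simp [unifB, hf, div_eq_mul_inv]
  have e3 : F x - (∑ z, F z) / Fintype.card (BState Q n)
      = (∑ z, (F x - F z)) / Fintype.card (BState Q n) := by
    simp only [Finset.sum_sub_distrib, Finset.sum_const, Finset.card_univ, nsmul_eq_mul]
    field_simp
  rw [Finset.sum_sub_distrib, e1, e2, e3, abs_div, abs_of_pos hN, div_le_iff₀ hN]
  refine (Finset.abs_sum_le_sum_abs _ _).trans ?_
  calc ∑ z, |F x - F z| ≤ ∑ z : BState Q n, 4 * (Q : ℝ) ^ 2 * (n : ℝ) ^ 2 / t := by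
        refine Finset.sum_le_sum fun z _ => ?_
        refine (abs_iterate_sub_le hosc t x z).trans ?_
        rw [le_div_iff₀ ht']
        have h1 := mul_iterate_coupOp_le hQ t x z
        have h2 := lyap_le hn x z
        have h3 : 2 * (Q : ℝ) ^ 2 * lyap x z ≤ 2 * (Q : ℝ) ^ 2 * (2 * (n : ℝ) ^ 2) :=
          mul_le_mul_of_nonneg_left h2 (by positivity)
        linarith
    _ = _ := by
        rw [Finset.sum_const, Finset.card_univ, nsmul_eq_mul, mul_comm]

/-- the lazy base-exchange chain on `B^(Q)(n)` mixes in time `O(n^2)`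
(Proposition A.1). -/
theorem statement15 (Q : Nat) (hQ : 2 ≤ Q) (eps : Real) (heps0 : 0 < eps) (heps1 : eps < 1) :
    ∃ Ceps : Real, 0 < Ceps ∧ ∀ n : Nat, 0 < n →
      ((Tmix (lazyBaseP Q n) (unifB Q n) eps : Nat) : Real) ≤ Ceps * (n : Real)^2 := by
  have hQ0 : 0 < Q := by omega
  have hQ' : (0 : ℝ) < Q := by exact_mod_cast hQ0
  refine ⟨4 * (Q : ℝ) ^ 2 / eps + 1, by positivity, fun n hn => ?_⟩
  have hn' : (1 : ℝ) ≤ n := by exact_mod_cast hn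
  set s : ℝ := 4 * (Q : ℝ) ^ 2 * (n : ℝ) ^ 2 / eps with hs
  have hs0 : 0 < s := by positivity
  have ht : 0 < ⌈s⌉₊ := Nat.ceil_pos.2 hs0
  have hD : DTV (lazyBaseP Q n) (unifB Q n) ⌈s⌉₊ ≤ eps := by
    refine (DTV_le hQ0 hn ht).trans ?_
    rw [div_le_iff₀ (by exact_mod_cast ht)]
    have h1 : s ≤ ⌈s⌉₊ := Nat.le_ceil s
    have h2 : 4 * (Q : ℝ) ^ 2 * (n : ℝ) ^ 2 = eps * s := by rw [hs]; field_simp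
    rw [h2]
    exact mul_le_mul_of_nonneg_left h1 heps0.le
  have hT : Tmix (lazyBaseP Q n) (unifB Q n) eps ≤ ⌈s⌉₊ := Nat.sInf_le hD
  have h3 : ((Tmix (lazyBaseP Q n) (unifB Q n) eps : Nat) : ℝ) ≤ ⌈s⌉₊ := by exact_mod_cast hT
  have h4 : (⌈s⌉₊ : ℝ) < s + 1 := Nat.ceil_lt_add_one hs0.le
  have h5 : s = 4 * (Q : ℝ) ^ 2 / eps * (n : ℝ) ^ 2 := by rw [hs]; ring
  nlinarith

end CongestionPaper
end
end

section
/- Let Q ≥ 2, κ ≥ 1 and n be positive integers with n < N = κQ. Then the load profile chain {ξ(t)} on Ξ_{n,S,κ} is reversible with respect to π_n, i.e. π_n(ξ)·p(ξ,ξ') = π_n(ξ')·p(ξ',ξ) for all ξ, ξ' ∈ Ξ_{n,S,κ}. In particular, for every distinct pair ξ, ξ' with ξ'_{v₋} = ξ_{v₋} − 1, ξ'_{v₊} = ξ_{v₊} + 1 and ξ'_v = ξ_v for v ∉ {v₋, v₊}, one has (ξ_{v₋}/n)·((κ−ξ_{v₊})/(1+N−n))·C(κ,ξ_{v₋})·C(κ,ξ_{v₊})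 = ((ξ_{v₊}+1)/n)·((κ−ξ_{v₋}+1)/(1+N−n))·C(κ,ξ_{v₊}+1)·C(κ,ξ_{v₋}−1), where C(κ,m) denotes the binomial coefficient. -/
/-!
Reversibility holds move by move. Write `f a = 1 / (a! (kap - a)!)` for the single-site weight.
The weights of two profiles joined by a move `vm → vp` differ only in the factors at these two
sites, and `(b + 1) f (b + 1) = (kap - b) f b` (`siteWeight_succ`), used once at `vm` and once at
`vp`, gives detailed balance for that move (`loadWeight_move`). Since the reverse transition is the
move `vp → vm`, summing over moves with the two indices exchanged gives detailed balance for the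
transition matrix (`loadWeight_reversible`), and the normalising constants of `loadPi` and `loadP`
are common to both sides. The binomial identity is the same computation, `C(kap, b)` being
`kap! f b`.
-/

open scoped BigOperators
open Filter MeasureTheory

noncomputable section

namespace CongestionPaper

attribute [local instance 10] Classical.propDecidable

/-- The single-site ratio behind detailed balance: with `f a = 1 / (a! (kap - a)!)`, one has
`(b + 1) f (b + 1) = (kap - b) f b`, both sides being `1 / (b! (kap - b - 1)!)`. -/
lemma siteWeight_succ (kap b : Nat) (hb : b < kap) :
    (1 : Real) / ((Nat.factorial (b + 1) : Real) * (Nat.factorial (kap - (b + 1)) : Real))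
        * ((b + 1 : Nat) : Real)
      = 1 / ((Nat.factorial b : Real) * (Nat.factorial (kap - b) : Real))
        * ((kap - b : Nat) : Real) := by
  obtain ⟨d, rfl⟩ : ∃ d, kap = b + 1 + d := ⟨kap - (b + 1), by omega⟩
  have h1 : b + 1 + d - (b + 1) = d := by omega
  have h2 : b + 1 + d - b = d + 1 := by omega
  rw [h1, h2, Nat.factorial_succ, Nat.factorial_succ]
  push_cast
  have hb0 : (Nat.factorial b : Real) ≠ 0 := by positivity
  have hd0 : (Nat.factorial d : Real) ≠ 0 := by positivity
  field_simp

/-- Detailed balance for the unnormalised weights along a single move `vm → vp`. The weights of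
`xi` and `xi'` differ only in the factors at `vm` and `vp`, and each of these two factors is
handled by `siteWeight_succ`. -/
lemma loadWeight_move {Q kap n : Nat} (xi xi' : LoadState Q kap n) (vm vp : Fin Q)
    (hne : vm ≠ vp) (hm : (xi'.1 vm : Nat) + 1 = (xi.1 vm : Nat))
    (hp : (xi'.1 vp : Nat) = (xi.1 vp : Nat) + 1)
    (hrest : ∀ v, v ≠ vm → v ≠ vp → xi'.1 v = xi.1 v) :
    loadWeight Q kap n xi
        * (((xi.1 vm : Nat) : Real) * (((kap - (xi.1 vp : Nat) : Nat)) : Real))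
      = loadWeight Q kap n xi'
        * (((xi'.1 vp : Nat) : Real) * (((kap - (xi'.1 vm : Nat) : Nat)) : Real)) := by
  have hmem : vp ∈ Finset.univ.erase vm := by simp [hne.symm]
  unfold loadWeight
  rw [← Finset.mul_prod_erase _ _ (Finset.mem_univ vm), ← Finset.mul_prod_erase _ _ hmem,
    ← Finset.mul_prod_erase _ _ (Finset.mem_univ vm), ← Finset.mul_prod_erase _ _ hmem]
  have hprod : ∏ v ∈ (Finset.univ.erase vm).erase vp, (1 : Real) /
        ((Nat.factorial (xi'.1 v : Nat) : Real) * (Nat.factorial (kap - (xi'.1 v : Nat)) : Real))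
      = ∏ v ∈ (Finset.univ.erase vm).erase vp, (1 : Real) /
        ((Nat.factorial (xi.1 v : Nat) : Real)
          * (Nat.factorial (kap - (xi.1 v : Nat)) : Real)) := by
    refine Finset.prod_congr rfl fun v hv => ?_
    simp only [Finset.mem_erase, Finset.mem_univ, and_true] at hv
    rw [hrest v hv.2 hv.1]
  rw [hprod]
  have hA := siteWeight_succ kap (xi'.1 vm : Nat) (by have := (xi.1 vm).isLt; omega)
  have hB := siteWeight_succ kap (xi.1 vp : Nat) (by have := (xi'.1 vp).isLt; omega)
  rw [hm] at hA
  rw [← hp] at hB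
  linear_combination
    (∏ v ∈ (Finset.univ.erase vm).erase vp, (1 : Real) /
        ((Nat.factorial (xi.1 v : Nat) : Real) * (Nat.factorial (kap - (xi.1 v : Nat)) : Real)))
      * ((1 : Real) / ((Nat.factorial (xi.1 vp : Nat) : Real)
          * (Nat.factorial (kap - (xi.1 vp : Nat)) : Real))
          * ((kap - (xi.1 vp : Nat) : Nat) : Real) * hA
        - (1 : Real) / ((Nat.factorial (xi'.1 vm : Nat) : Real)
          * (Nat.factorial (kap - (xi'.1 vm : Nat)) : Real))
          * ((kap - (xi'.1 vm : Nat) : Nat) : Real) * hB)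

lemma loadWeight_reversible {Q kap n : Nat} (xi xi' : LoadState Q kap n) :
    loadWeight Q kap n xi * loadP Q kap n xi xi'
      = loadWeight Q kap n xi' * loadP Q kap n xi' xi := by
  by_cases h : xi' = xi
  · subst h; rfl
  · unfold loadP
    rw [if_neg h, if_neg (Ne.symm h), ← mul_div_assoc, ← mul_div_assoc]
    congr 1
    -- The term of the move `vm → vp` matches the term of the reverse move `vp → vm`.
    conv_rhs => rw [Finset.sum_comm]
    simp only [Finset.mul_sum]
    refine Finset.sum_congr rfl fun vm _ => Finset.sum_congr rfl fun vp _ => ?_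
    split_ifs with h1 h2 h2
    · exact loadWeight_move xi xi' vm vp h1.1 h1.2.1 h1.2.2.1 h1.2.2.2
    · exact absurd ⟨h1.1.symm, h1.2.2.1.symm, h1.2.1.symm,
        fun v a b => (h1.2.2.2 v b a).symm⟩ h2
    · exact absurd ⟨h2.1.symm, h2.2.2.1.symm, h2.2.1.symm,
        fun v a b => (h2.2.2.2 v b a).symm⟩ h1
    · simp

/-- the load profile chain is reversible with respect to `pi_n`,
together with the explicit binomial-coefficient identity. -/
theorem statement17 (Q : Nat) (hQ : 2 ≤ Q) (kap n : Nat) (hkap : 0 < kap) (hn : 0 < n)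
    (hnN : n < kap * Q) :
    (∀ xi xi' : LoadState Q kap n,
      loadPi Q kap n xi * loadP Q kap n xi xi' = loadPi Q kap n xi' * loadP Q kap n xi' xi) ∧
    (∀ xi xi' : LoadState Q kap n, ∀ vm vp : Fin Q, vm ≠ vp →
      (xi'.1 vm : Nat) + 1 = (xi.1 vm : Nat) → (xi'.1 vp : Nat) = (xi.1 vp : Nat) + 1 →
      (∀ v, v ≠ vm → v ≠ vp → xi'.1 v = xi.1 v) →
      ((xi.1 vm : Nat) : Real) / (n : Real)
          * (((kap - (xi.1 vp : Nat) : Nat) : Real) / ((1 + kap * Q - n : Nat) : Real))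
          * ((Nat.choose kap (xi.1 vm : Nat) : Nat) : Real)
          * ((Nat.choose kap (xi.1 vp : Nat) : Nat) : Real)
        = (((xi.1 vp : Nat) : Real) + 1) / (n : Real)
          * (((kap - (xi.1 vm : Nat) + 1 : Nat) : Real) / ((1 + kap * Q - n : Nat) : Real))
          * ((Nat.choose kap ((xi.1 vp : Nat) + 1) : Nat) : Real)
          * ((Nat.choose kap ((xi.1 vm : Nat) - 1) : Nat) : Real)) := by
  refine ⟨fun xi xi' => ?_, fun xi xi' vm vp _ hm hp _ => ?_⟩
  · unfold loadPi
    rw [div_mul_eq_mul_div, div_mul_eq_mul_div, loadWeight_reversible]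
  -- `C(kap, k + 1) (k + 1) = C(kap, k) (kap - k)` at `k = xi vp` and at `k = xi vm - 1`.
  · have hA := Nat.choose_succ_right_eq kap (xi'.1 vm : Nat)
    have hB := Nat.choose_succ_right_eq kap (xi.1 vp : Nat)
    have hlt := (xi.1 vm).isLt
    have e1 : (xi.1 vm : Nat) - 1 = (xi'.1 vm : Nat) := by omega
    have e2 : kap - (xi.1 vm : Nat) + 1 = kap - (xi'.1 vm : Nat) := by omega
    rw [hm] at hA
    rw [e1, e2]
    have hA' : ((Nat.choose kap (xi.1 vm : Nat) : Nat) : Real) * ((xi.1 vm : Nat) : Real)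
        = ((Nat.choose kap (xi'.1 vm : Nat) : Nat) : Real)
          * ((kap - (xi'.1 vm : Nat) : Nat) : Real) := by exact_mod_cast hA
    have hB' : ((Nat.choose kap ((xi.1 vp : Nat) + 1) : Nat) : Real)
          * (((xi.1 vp : Nat) : Real) + 1)
        = ((Nat.choose kap (xi.1 vp : Nat) : Nat) : Real)
          * ((kap - (xi.1 vp : Nat) : Nat) : Real) := by exact_mod_cast hB
    linear_combination
      (n : Real)⁻¹ * ((1 + kap * Q - n : Nat) : Real)⁻¹
        * (((Nat.choose kap (xi.1 vp : Nat) : Nat) : Real)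
            * ((kap - (xi.1 vp : Nat) : Nat) : Real) * hA'
          - ((Nat.choose kap (xi'.1 vm : Nat) : Nat) : Real)
            * ((kap - (xi'.1 vm : Nat) : Nat) : Real) * hB')

end CongestionPaper
end
end

section
/- Fix an integer Q ≥ 2 and ρ ∈ (0,1), and set γ := 1/((1−ρ)ρ). There exist a constant C > 0 and N₀ > 0, both depending only on ρ and Q, such that for all positive integers κ with N = κQ ≥ N₀ and n = ⌊ρN⌋, the load profile chain {ξ(t)} started from any initial state satisfies, almost surely for every t ∈ ℤ₊: E[ ‖Δ(t+1)‖² | F_t ] ≤ (1 − 2γ/N)·‖Δ(t)‖² + CQ/N², where Δ(t) = (ξ_v(t)/N − ρ/Q)_{v∈S}, ‖·‖ is the Euclidean norm on ℝ^Q, and {F_t} is the natural filtration of the chain. -/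
/-!
A move of one unit from `u` to `v` changes `∑ (ξ/N - ρ/Q)²` by `(2/N²)(1 + ξ_v - ξ_u)` and has
probability `ξ_u (κ - ξ_v) / (n M)`, where `M = N - n + 1`. The one-step average of the squared
distance is therefore an explicit expression in `n` and `S = ∑ ξ_v²` (`sum_loadP_mul`,
`pair_sum`): the cubic terms cancel by antisymmetry and
`∑_{u,v} ξ_u (κ - ξ_v)(ξ_v - ξ_u) = -κ (Q S - n²) = -N D`, where `D` is the squared distance of
`ξ` to its own mean `n/Q`. The drift is thus at most `-2 D / (N n M) + 2 / N²`.

Since `n = ⌊ρN⌋`, `D / N²` differs from the squared distance by at most `1 / N²`, and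
`n M ≤ ρ(1-ρ)N² + 2ρN`, so `1/(n M) ≥ γ/N² - 2γ²/N³`. As `D ≤ N²`, all errors are `O(1/N²)`
(`drift_arith`).
-/


open scoped BigOperators
open Filter MeasureTheory

noncomputable section

namespace CongestionPaper

attribute [local instance 10] Classical.propDecidable

/-- `xi'` arises from `xi` by moving one unit of load from `vm` to `vp`. -/
def IsMove {Q kap n : Nat} (xi xi' : LoadState Q kap n) (vm vp : Fin Q) : Prop :=
  vm ≠ vp ∧ (xi'.1 vm : Nat) + 1 = (xi.1 vm : Nat) ∧ (xi'.1 vp : Nat) = (xi.1 vp : Nat) + 1 ∧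
    (∀ v, v ≠ vm -> v ≠ vp -> xi'.1 v = xi.1 v)

lemma IsMove.ne {Q kap n : Nat} {xi xi' : LoadState Q kap n} {vm vp : Fin Q}
    (h : IsMove xi xi' vm vp) : xi' ≠ xi := by
  rintro rfl
  have := h.2.1
  omega

lemma IsMove.unique {Q kap n : Nat} {xi a b : LoadState Q kap n} {vm vp : Fin Q}
    (ha : IsMove xi a vm vp) (hb : IsMove xi b vm vp) : a = b := by
  obtain ⟨_, a1, a2, a3⟩ := ha
  obtain ⟨_, b1, b2, b3⟩ := hb
  apply Subtype.ext
  funext v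
  by_cases h1 : v = vm
  · subst h1; apply Fin.ext; omega
  by_cases h2 : v = vp
  · subst h2; apply Fin.ext; omega
  rw [a3 v h1 h2, b3 v h1 h2]

lemma exists_isMove {Q kap n : Nat} (xi : LoadState Q kap n) {vm vp : Fin Q} (hne : vm ≠ vp)
    (hm : 0 < (xi.1 vm : Nat)) (hp : (xi.1 vp : Nat) < kap) : ∃ a, IsMove xi a vm vp := by
  let g : Fin Q → Fin (kap + 1) := fun v =>
    if v = vm then ⟨(xi.1 vm : Nat) - 1, by omega⟩
    else if v = vp then ⟨(xi.1 vp : Nat) + 1, by omega⟩ else xi.1 v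
  have gm : (g vm : Nat) = (xi.1 vm : Nat) - 1 := by simp [g]
  have gp : (g vp : Nat) = (xi.1 vp : Nat) + 1 := by simp [g, hne.symm]
  have go : ∀ v, v ≠ vm → v ≠ vp → g v = xi.1 v := by
    intro v h1 h2; simp [g, h1, h2]
  have hs : ∑ v, (((g v : Nat) : Int) - ((xi.1 v : Nat) : Int)) = 0 := by
    rw [Fintype.sum_eq_add vm vp hne]
    · rw [gm, gp]; omega
    · rintro v ⟨h1, h2⟩
      rw [go v h1 h2, sub_self]
  have hs' : ∑ v, (g v : Nat) = n := by
    rw [Finset.sum_sub_distrib] at hs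
    have := xi.2
    zify at this ⊢
    linarith
  exact ⟨⟨g, hs'⟩, hne, by simp only [gm]; omega, gp, go⟩

/-- The effect of a single move on the squared distance to the flat profile. -/
lemma IsMove.sq_dist {Q kap n : Nat} {xi a : LoadState Q kap n} {vm vp : Fin Q}
    (h : IsMove xi a vm vp) (N r : Real) :
    ∑ v, (((a.1 v : Nat) : Real) / N - r)^2
      = ∑ v, (((xi.1 v : Nat) : Real) / N - r)^2
        + 2 / N^2 * (1 + ((xi.1 vp : Nat) : Real) - ((xi.1 vm : Nat) : Real)) := by
  obtain ⟨hne, h1, h2, h3⟩ := h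
  rw [← sub_eq_iff_eq_add', ← Finset.sum_sub_distrib, Fintype.sum_eq_add vm vp hne]
  · have e1 : ((xi.1 vm : Nat) : Real) = ((a.1 vm : Nat) : Real) + 1 := by
      rw [← h1]; push_cast; ring
    have e2 : ((a.1 vp : Nat) : Real) = ((xi.1 vp : Nat) : Real) + 1 := by
      rw [h2]; push_cast; ring
    rw [e1, e2]
    ring
  · rintro v ⟨k1, k2⟩
    rw [h3 v k1 k2, sub_self]

/-- The one-step average of the squared distance, as a sum over ordered pairs of resources
instead of target states. -/
lemma sum_loadP_mul {Q kap n : Nat} (xi : LoadState Q kap n) (N r : Real) :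
    ∑ a : LoadState Q kap n, loadP Q kap n xi a * (∑ v, (((a.1 v : Nat) : Real) / N - r)^2)
      = ((∑ v, ((xi.1 v : Nat) : Real) * (((1 + kap - (xi.1 v : Nat) : Nat)) : Real))
            * (∑ v, (((xi.1 v : Nat) : Real) / N - r)^2)
          + ∑ vm, ∑ vp, if vm ≠ vp then
              ((xi.1 vm : Nat) : Real) * (((kap - (xi.1 vp : Nat) : Nat)) : Real)
              * (∑ v, (((xi.1 v : Nat) : Real) / N - r)^2
                + 2 / N^2 * (1 + ((xi.1 vp : Nat) : Real) - ((xi.1 vm : Nat) : Real))) else 0)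
        / ((n : Real) * ((1 + kap * Q - n : Nat) : Real)) := by
  set F : LoadState Q kap n → Real := fun a => ∑ v, (((a.1 v : Nat) : Real) / N - r)^2 with hF
  set K : Real := (n : Real) * ((1 + kap * Q - n : Nat) : Real)
  set A : Real := ∑ v, ((xi.1 v : Nat) : Real) * (((1 + kap - (xi.1 v : Nat) : Nat)) : Real)
  set w : Fin Q → Fin Q → Real := fun vm vp =>
    ((xi.1 vm : Nat) : Real) * (((kap - (xi.1 vp : Nat) : Nat)) : Real) with hw
  -- A move is never a loop, so the two branches of `loadP` can be added.
  have h1 : ∀ a, loadP Q kap n xi a * F a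
      = ((if a = xi then A * F xi else 0)
          + ∑ vm, ∑ vp, if IsMove xi a vm vp then w vm vp * F a else 0) / K := by
    intro a
    by_cases ha : a = xi
    · subst ha
      have : ∀ vm vp, ¬ IsMove a a vm vp := fun vm vp h => h.ne rfl
      simp only [loadP, this, if_true, if_false, Finset.sum_const_zero, add_zero]
      ring
    · simp only [loadP, ha, if_false, zero_add]
      rw [div_mul_eq_mul_div, Finset.sum_mul]
      congr 1
      refine Finset.sum_congr rfl fun vm _ => ?_
      rw [Finset.sum_mul]
      refine Finset.sum_congr rfl fun vp _ => ?_
      by_cases h : IsMove xi a vm vp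
      · rw [if_pos h]
        exact congrArg (· * F a) (if_pos h)
      · rw [if_neg h]
        exact (congrArg (· * F a) (if_neg h)).trans (zero_mul _)
  have h2 : ∀ vm vp, ∑ a, (if IsMove xi a vm vp then w vm vp * F a else 0)
      = if vm ≠ vp then w vm vp *
        (F xi + 2 / N^2 * (1 + ((xi.1 vp : Nat) : Real) - ((xi.1 vm : Nat) : Real))) else 0 := by
    intro vm vp
    by_cases hne : vm = vp
    · rw [if_neg (not_not.2 hne)]
      exact Finset.sum_eq_zero fun a _ => if_neg fun h => h.1 hne
    rw [if_pos hne]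
    by_cases hm : 0 < (xi.1 vm : Nat) ∧ (xi.1 vp : Nat) < kap
    · obtain ⟨a, ha⟩ := exists_isMove xi hne hm.1 hm.2
      rw [Finset.sum_eq_single a, if_pos ha]
      · congr 1
        exact ha.sq_dist N r
      · intro b _ hb
        exact if_neg fun h => hb (h.unique ha)
      · intro h; exact absurd (Finset.mem_univ a) h
    · have hz : w vm vp = 0 := by
        have h0 : (xi.1 vm : Nat) = 0 ∨ kap - (xi.1 vp : Nat) = 0 := by omega
        rcases h0 with h0 | h0 <;> simp only [hw, h0] <;> simp
      simp only [hz, zero_mul, ite_self, Finset.sum_const_zero]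
  change ∑ a, loadP Q kap n xi a * F a = _
  rw [Finset.sum_congr rfl fun a _ => h1 a, ← Finset.sum_div, Finset.sum_add_distrib,
    Finset.sum_comm]
  congr 2
  · simp [hF]
  · refine Finset.sum_congr rfl fun vm _ => ?_
    rw [Finset.sum_comm]
    exact Finset.sum_congr rfl fun vp _ => h2 vm vp

/-- Evaluation of the pair sum; the cubic terms cancel by antisymmetry. -/
lemma pair_sum {Q : Nat} (x : Fin Q → Real) (k F b : Real) :
    ((∑ v, x v * (1 + k - x v)) * F
      + ∑ u, ∑ v, if u ≠ v then x u * (k - x v) * (F + b * (1 + x v - x u)) else 0)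
    = (∑ v, x v) * (k * Q - ∑ v, x v + 1) * F
      + b * ((∑ v, x v) * (k * Q - ∑ v, x v) - (k * (∑ v, x v) - ∑ v, x v ^ 2))
      + b * k * ((∑ v, x v)^2 - Q * ∑ v, x v ^ 2) := by
  have h1 : ∀ u, (∑ v, if u ≠ v then x u * (k - x v) * (F + b * (1 + x v - x u)) else 0)
      = (∑ v, x u * (k - x v) * (F + b * (1 + x v - x u))) - x u * (k - x u) * (F + b) := by
    intro u
    rw [eq_sub_iff_add_eq, ← Finset.add_sum_erase _ _ (Finset.mem_univ u),
      ← Finset.add_sum_erase Finset.univ (fun v => x u * (k - x v) * (F + b * (1 + x v - x u)))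
        (Finset.mem_univ u)]
    have : ∑ v ∈ Finset.univ.erase u,
          (if u ≠ v then x u * (k - x v) * (F + b * (1 + x v - x u)) else 0)
        = ∑ v ∈ Finset.univ.erase u, x u * (k - x v) * (F + b * (1 + x v - x u)) :=
      Finset.sum_congr rfl fun v hv => if_pos (Finset.ne_of_mem_erase hv).symm
    rw [this]
    simp only [ne_eq, not_true_eq_false, if_false]
    ring
  have h2 : ∀ u, ∑ v, x u * (k - x v) * (F + b * (1 + x v - x u))
      = x u * (F + b) * (k * Q - ∑ v, x v) + b * (k * x u * ∑ v, x v)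
        - b * k * Q * x u ^ 2 - b * (x u * ∑ v, x v ^ 2) + b * (x u ^ 2 * ∑ v, x v) := by
    intro u
    have : ∀ v, x u * (k - x v) * (F + b * (1 + x v - x u))
        = (x u * (F + b) * k - b * k * x u ^ 2)
          + (b * k * x u - x u * (F + b) + b * x u ^ 2) * x v - b * x u * x v ^ 2 := by
      intro v; ring
    simp only [this, Finset.sum_sub_distrib, Finset.sum_add_distrib, ← Finset.mul_sum,
      Finset.sum_const, Finset.card_univ, Fintype.card_fin, nsmul_eq_mul]
    ring
  have h3 : ∑ v, x v * (1 + k - x v) = (1 + k) * ∑ v, x v - ∑ v, x v ^ 2 := by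
    rw [Finset.mul_sum, ← Finset.sum_sub_distrib]
    exact Finset.sum_congr rfl fun v _ => by ring
  have h4 : ∑ v, x v * (k - x v) * (F + b) = (k * ∑ v, x v - ∑ v, x v ^ 2) * (F + b) := by
    rw [Finset.mul_sum, ← Finset.sum_sub_distrib, Finset.sum_mul]
    exact Finset.sum_congr rfl fun v _ => by ring
  have h5 : ∑ u, (x u * (F + b) * (k * Q - ∑ v, x v) + b * (k * x u * ∑ v, x v)
        - b * k * Q * x u ^ 2 - b * (x u * ∑ v, x v ^ 2) + b * (x u ^ 2 * ∑ v, x v))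
      = (∑ v, x v) * (F + b) * (k * Q - ∑ v, x v) + b * (k * (∑ v, x v) * ∑ v, x v)
        - b * k * Q * (∑ v, x v ^ 2) - b * ((∑ v, x v) * ∑ v, x v ^ 2)
        + b * ((∑ v, x v ^ 2) * ∑ v, x v) := by
    simp only [Finset.sum_sub_distrib, Finset.sum_add_distrib, ← Finset.mul_sum, ← Finset.sum_mul]
  simp only [h1, h2, Finset.sum_sub_distrib, h3, h4]
  rw [h5]
  ring

/-- The error estimate: replacing `1/(n(N-n+1))` by `γ/N²` and the distance to the empirical mean
by the distance to `ρ/Q` costs `O(1/N²)`. Here `D` is the squared distance of the profile to its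
mean, `e` the squared rounding error of the mean, and `W` the weight of the
diagonal pairs, which are not moves. -/
lemma drift_arith (g rho N n D e W : Real) (h0 : 0 < rho) (h1 : rho < 1)
    (hg : g * ((1 - rho) * rho) = 1) (hg0 : 0 < g) (hN : 1 ≤ N) (hn : 0 < n)
    (hn1 : n ≤ rho * N) (hn2 : rho * N - 1 ≤ n) (hD0 : 0 ≤ D) (hD : D ≤ N^2)
    (he1 : e ≤ 1) (hW : 0 ≤ W) :
    (n * (N - n + 1) * (D / N^2 + e / N^2) + 2 / N^2 * (n * (N - n) - W) - 2 / N^2 * (N * D))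
        / (n * (N - n + 1))
      ≤ (1 - 2 * g / N) * (D / N^2 + e / N^2) + (2 + 2 * g + 4 * g^2) / N^2 := by
  have hM : 0 < N - n + 1 := by nlinarith
  have hN0 : 0 < N := by linarith
  set K := n * (N - n + 1) with hK
  have hK0 : 0 < K := mul_pos hn hM
  have hKle : K ≤ rho * N * ((1 - rho) * N + 2) := by
    apply mul_le_mul hn1 (by linarith) hM.le (by positivity)
  have hgK : g * K ≤ N^2 + 2 * g * N := by
    have e1 : g * (rho * N * ((1 - rho) * N + 2)) = N^2 * (g * ((1 - rho) * rho))
        + 2 * g * N * rho := by ring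
    have e2 : g * K ≤ g * (rho * N * ((1 - rho) * N + 2)) :=
      mul_le_mul_of_nonneg_left hKle hg0.le
    rw [e1, hg] at e2
    nlinarith [mul_pos hg0 hN0]
  -- `γ ≤ N²/K + 2γ²/N`, the lower bound on the contraction rate
  have hrate : g ≤ N^2 / K + 2 * g^2 / N := by
    have hinv : N^2 / (N^2 + 2 * g * N) ≤ N^2 / (g * K) := by
      apply div_le_div_of_nonneg_left (by positivity) (by positivity) hgK
    have : 1 - 2 * g / N ≤ N^2 / (N^2 + 2 * g * N) := by
      rw [le_div_iff₀ (by positivity)]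
      have : (1 - 2 * g / N) * (N^2 + 2 * g * N) = N^2 - 4 * g^2 := by
        field_simp; ring
      rw [this]; nlinarith [sq_nonneg g]
    have h3 := mul_le_mul_of_nonneg_left (this.trans hinv) hg0.le
    have e3 : g * (N^2 / (g * K)) = N^2 / K := by field_simp
    have e4 : g * (1 - 2 * g / N) = g - 2 * g^2 / N := by ring
    rw [e3, e4] at h3
    linarith
  have hL : (K * (D / N^2 + e / N^2) + 2 / N^2 * (n * (N - n) - W) - 2 / N^2 * (N * D)) / K
      = (D / N^2 + e / N^2) + (2 * ((n * (N - n) - W) / K) - 2 * (N * D / K)) / N^2 := by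
    field_simp
    ring
  have hR : (1 - 2 * g / N) * (D / N^2 + e / N^2) + (2 + 2 * g + 4 * g^2) / N^2
      = (D / N^2 + e / N^2) + ((2 + 2 * g + 4 * g^2) - 2 * g / N * (D + e)) / N^2 := by
    field_simp
    ring
  rw [hL, hR]
  have a1 : (n * (N - n) - W) / K ≤ 1 := by
    rw [div_le_one hK0]; nlinarith
  have a2 : g / N * e ≤ g := by
    have : g / N ≤ g := div_le_self hg0.le hN
    have : g / N * e ≤ g / N * 1 := mul_le_mul_of_nonneg_left he1 (by positivity)
    linarith
  have a3 : g / N * D ≤ N * D / K + 2 * g^2 := by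
    have h3 := mul_le_mul_of_nonneg_right hrate (by positivity : 0 ≤ D / N)
    have e3 : (N^2 / K + 2 * g^2 / N) * (D / N) = N * D / K + 2 * g^2 * (D / N^2) := by
      field_simp
    have e4 : D / N^2 ≤ 1 := by rw [div_le_one (by positivity)]; exact hD
    have e5 : 2 * g^2 * (D / N^2) ≤ 2 * g^2 := by nlinarith [sq_nonneg g]
    have e6 : g / N * D = g * (D / N) := by ring
    rw [e6]; linarith
  have hfin : 2 * ((n * (N - n) - W) / K) - 2 * (N * D / K)
      ≤ (2 + 2 * g + 4 * g^2) - 2 * g / N * (D + e) := by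
    have : 2 * g / N * (D + e) = 2 * (g / N * D) + 2 * (g / N * e) := by ring
    rw [this]; linarith
  have := div_le_div_of_nonneg_right hfin (by positivity : 0 ≤ N^2)
  linarith

set_option maxHeartbeats 1000000 in
/-- one-step conditional drift bound for the squared distance of the
normalized load profile to the flat profile.  For a Markov chain, the conditional
expectation `E[‖Δ(t+1)‖² | F_t]` with respect to the natural filtration equals almost
surely the one-step average `∑_{xi'} p(xi(t), xi') ‖Δ(xi')‖²`, so the claim is stated
as a bound holding at every state of the chain. -/
theorem statement18 (Q : Nat) (hQ : 2 ≤ Q) (rho : Real) (hrho0 : 0 < rho) (hrho1 : rho < 1) :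
    ∃ C N0 : Real, 0 < C ∧ 0 < N0 ∧
      ∀ kap : Nat, 0 < kap → N0 ≤ ((kap * Q : Nat) : Real) →
      ∀ n : Nat, n = ⌊rho * ((kap * Q : Nat) : Real)⌋₊ →
      ∀ xi : LoadState Q kap n,
        (∑ xi' : LoadState Q kap n, loadP Q kap n xi xi' *
            (∑ v, (((xi'.1 v : Nat) : Real) / ((kap * Q : Nat) : Real) - rho / (Q : Real))^2))
          ≤ (1 - 2 * (1 / ((1 - rho) * rho)) / ((kap * Q : Nat) : Real)) *
              (∑ v, (((xi.1 v : Nat) : Real) / ((kap * Q : Nat) : Real) - rho / (Q : Real))^2)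
            + C * (Q : Real) / ((kap * Q : Nat) : Real)^2 := by
  set g : Real := 1 / ((1 - rho) * rho) with hgdef
  have hpos : 0 < (1 - rho) * rho := mul_pos (by linarith) hrho0
  have hg0 : 0 < g := by positivity
  have hg : g * ((1 - rho) * rho) = 1 := by rw [hgdef]; exact one_div_mul_cancel hpos.ne'
  refine ⟨2 + 2 * g + 4 * g^2, 1 / rho, by positivity, by positivity, ?_⟩
  intro kap hkap hN0 n hn xi
  rw [sum_loadP_mul]
  have hQ0 : (2 : Real) ≤ Q := by exact_mod_cast hQ
  have hQpos : (0 : Real) < Q := by linarith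
  have hk0 : (0 : Real) < kap := by exact_mod_cast hkap
  have hNr : ((kap * Q : Nat) : Real) = (kap : Real) * Q := by push_cast; ring
  set N : Real := ((kap * Q : Nat) : Real) with hNdef
  have hNpos : 0 < N := by rw [hNr]; positivity
  have hN1 : 1 ≤ rho * N := by
    rw [div_le_iff₀ hrho0] at hN0; linarith
  have hn1 : (n : Real) ≤ rho * N := by rw [hn]; exact Nat.floor_le (by positivity)
  have hn2 : rho * N - 1 ≤ n := by rw [hn]; exact (Nat.sub_one_lt_floor _).le
  have hnpos : 0 < n := by rw [hn]; exact Nat.floor_pos.2 hN1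
  have hnN : n ≤ kap * Q := by
    have : (n : Real) ≤ N := by nlinarith
    rw [hNdef] at this
    exact_mod_cast this
  have hM : ((1 + kap * Q - n : Nat) : Real) = N - n + 1 := by
    rw [Nat.cast_sub (by omega), hNdef]; push_cast; ring
  have hb : ∀ v, (xi.1 v : Nat) ≤ kap := fun v => Nat.lt_succ_iff.1 (xi.1 v).2
  have hc1 : ∀ v, ((1 + kap - (xi.1 v : Nat) : Nat) : Real) = 1 + kap - ((xi.1 v : Nat) : Real) := by
    intro v
    rw [Nat.cast_sub (by have := hb v; omega)]; push_cast; ring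
  have hc2 : ∀ v, ((kap - (xi.1 v : Nat) : Nat) : Real) = kap - ((xi.1 v : Nat) : Real) :=
    fun v => Nat.cast_sub (hb v)
  simp only [hc1, hc2, hM]
  rw [pair_sum (fun v => ((xi.1 v : Nat) : Real)) kap]
  have hsum : ∑ v, ((xi.1 v : Nat) : Real) = n := by exact_mod_cast xi.2
  rw [hsum]
  set S : Real := ∑ v, ((xi.1 v : Nat) : Real)^2 with hS
  set D : Real := S - n^2 / Q with hD
  have hF : ∑ v, (((xi.1 v : Nat) : Real) / N - rho / Q)^2
      = D / N^2 + ((n - rho * N)^2 / Q) / N^2 := by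
    have : ∀ v, (((xi.1 v : Nat) : Real) / N - rho / Q)^2
        = 1 / N^2 * ((xi.1 v : Nat) : Real)^2 - 2 * rho / (N * Q) * ((xi.1 v : Nat) : Real)
          + (rho / Q)^2 := by
      intro v; field_simp; ring
    simp only [this, Finset.sum_sub_distrib, Finset.sum_add_distrib, ← Finset.mul_sum,
      Finset.sum_const, Finset.card_univ, Fintype.card_fin, nsmul_eq_mul, hsum, hD]
    rw [← hS]
    field_simp
    ring
  have hSle : S ≤ kap * n := by
    rw [hS, ← hsum, Finset.mul_sum]
    refine Finset.sum_le_sum fun v _ => ?_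
    have h1 : ((xi.1 v : Nat) : Real) ≤ kap := by exact_mod_cast hb v
    have h2 : (0 : Real) ≤ ((xi.1 v : Nat) : Real) := Nat.cast_nonneg _
    nlinarith
  have hD0 : 0 ≤ D := by
    have := sq_sum_le_card_mul_sum_sq (s := Finset.univ)
      (f := fun v => ((xi.1 v : Nat) : Real))
    rw [hsum, Finset.card_univ, Fintype.card_fin, ← hS] at this
    rw [hD, sub_nonneg, div_le_iff₀ hQpos]
    linarith
  have hnr : (0 : Real) < n := by exact_mod_cast hnpos
  have hDle : D ≤ N^2 := by
    have h1 : 0 ≤ (n : Real)^2 / Q := by positivity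
    have h2 : (n : Real) ≤ N := by nlinarith
    have h3 : (kap : Real) ≤ N := by rw [hNr]; nlinarith
    have h4 : (kap : Real) * n ≤ N * N := mul_le_mul h3 h2 hnr.le hNpos.le
    have h5 : D ≤ S := by rw [hD]; linarith
    nlinarith
  have he : (n - rho * N)^2 / Q ≤ 1 := by
    rw [div_le_one hQpos]; nlinarith
  have key := drift_arith g rho N n D ((n - rho * N)^2 / Q) (kap * n - S) hrho0 hrho1 hg hg0
    (by nlinarith) hnr hn1 hn2 hD0 hDle he (by linarith)
  rw [hF]
  have hND : (kap : Real) * ((n : Real)^2 - Q * S) = -(N * D) := by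
    rw [hNr, hD]; field_simp; ring
  have hnum : (n : Real) * (kap * Q - n + 1) * (D / N^2 + ((n - rho * N)^2 / Q) / N^2)
        + 2 / N^2 * (n * (kap * Q - n) - (kap * n - S)) + 2 / N^2 * kap * ((n : Real)^2 - Q * S)
      = n * (N - n + 1) * (D / N^2 + ((n - rho * N)^2 / Q) / N^2)
        + 2 / N^2 * (n * (N - n) - (kap * n - S)) - 2 / N^2 * (N * D) := by
    rw [mul_assoc (2 / N^2) (kap : Real), hND, ← hNr]; ring
  rw [hnum]
  refine key.trans (add_le_add le_rfl ?_)
  apply div_le_div_of_nonneg_right _ (by positivity)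
  have : 0 ≤ 2 + 2 * g + 4 * g^2 := by positivity
  nlinarith

end CongestionPaper
end
end

section
/- Let Q ≥ 2, κ ≥ 1 and n be positive integers with n ≤ κQ. Then the stationary distribution π_n of the load profile chain, given by π_n(ξ) ∝ ∏_{v∈S} 1/(ξ_v!·(κ−ξ_v)!) on Ξ_{n,S,κ}, is log M-concave: for all ξ, ξ̃ ∈ Ξ_{n,S,κ} and every i ∈ S with ξ_i > ξ̃_i, there exists j ∈ S with ξ_j < ξ̃_j such that ξ − e_i + e_j ∈ Ξ_{n,S,κ}, ξ̃ − e_j + e_i ∈ Ξ_{n,S,κ}, and log π_n(ξ) + log π_n(ξ̃) ≤ log π_n(ξ − e_i + e_j) + log π_n(ξ̃ − e_j + e_i). -/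
/-!
The weight is a product over sites of `g(a) = 1/(a! (kap - a)!)`, and `g` is log-concave on
`{0, ..., kap}` (`factorial_weight_exchange`). If `xi_i > xit_i`, equality of the total loads gives
some `j` with `xi_j < xit_j`, and any such `j` works: the exchange `xi - e_i + e_j`,
`xit - e_j + e_i` brings the two loads at `i`, and the two loads at `j`, one step towards each other
(or swaps them), so neither `g(xi_i) g(xit_i)` nor `g(xi_j) g(xit_j)` decreases, while all other
factors are unchanged (`loadWeight_mul_le`). The normalizing constant appears twice on both sides
and cancels.
-/

open scoped BigOperators
open Filter MeasureTheory

noncomputable section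

namespace CongestionPaper

attribute [local instance 10] Classical.propDecidable

/-- Log-concavity of `a ↦ 1/(a! (kap - a)!)` on `{0, ..., kap}`: moving the arguments `a + 1` and
`b ≤ a` one step towards each other does not decrease the product. After clearing denominators
this is `(kap - a) (b + 1) ≤ (a + 1) (kap - b)`. -/
lemma factorial_weight_exchange (kap a b : Nat) (hba : b ≤ a) (ha : a + 1 ≤ kap) :
    ((1 : Real) / ((Nat.factorial (a + 1) : Real) * (Nat.factorial (kap - (a + 1)) : Real))) *
      ((1 : Real) / ((Nat.factorial b : Real) * (Nat.factorial (kap - b) : Real))) ≤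
    ((1 : Real) / ((Nat.factorial a : Real) * (Nat.factorial (kap - a) : Real))) *
      ((1 : Real) / ((Nat.factorial (b + 1) : Real) *
        (Nat.factorial (kap - (b + 1)) : Real))) := by
  obtain ⟨c, rfl⟩ := Nat.exists_eq_add_of_le ha
  obtain ⟨k, rfl⟩ := Nat.exists_eq_add_of_le hba
  rw [show b + k + 1 + c - (b + k + 1) = c by omega, show b + k + 1 + c - b = (k + c) + 1 by omega,
    show b + k + 1 + c - (b + k) = c + 1 by omega, show b + k + 1 + c - (b + 1) = k + c by omega,
    one_div_mul_one_div, one_div_mul_one_div]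
  apply one_div_le_one_div_of_le (by positivity)
  have key : (c + 1) * (b + 1) ≤ (b + k + 1) * (k + c + 1) := by
    rw [mul_comm]
    exact Nat.mul_le_mul (by omega) (by omega)
  have h := Nat.mul_le_mul_left
    ((b + k).factorial * c.factorial * b.factorial * (k + c).factorial) key
  norm_cast
  simp only [Nat.factorial_succ]
  calc _ = _ := by ring
    _ ≤ _ := h
    _ = _ := by ring

/-- One unit of load can be moved from a nonempty site `i` to a non-full site `j`. -/
lemma exists_move {Q kap n : Nat} (x : LoadState Q kap n) (i j : Fin Q) (hij : i ≠ j)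
    (hi : 0 < (x.1 i : Nat)) (hj : (x.1 j : Nat) < kap) :
    ∃ y : LoadState Q kap n, (y.1 i : Nat) + 1 = (x.1 i : Nat) ∧
      (y.1 j : Nat) = (x.1 j : Nat) + 1 ∧ ∀ v, v ≠ i → v ≠ j → y.1 v = x.1 v := by
  let f : Fin Q → Fin (kap + 1) := fun v =>
    if v = i then ⟨(x.1 i : Nat) - 1, by omega⟩
    else if v = j then ⟨(x.1 j : Nat) + 1, by omega⟩ else x.1 v
  have fi : (f i : Nat) = (x.1 i : Nat) - 1 := by simp [f]
  have fj : (f j : Nat) = (x.1 j : Nat) + 1 := by simp [f, hij.symm]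
  have fv : ∀ v, v ≠ i → v ≠ j → f v = x.1 v := fun v h1 h2 => by simp [f, h1, h2]
  have hpt : ∀ v, (f v : Nat) + (if v = i then 1 else 0) =
      (x.1 v : Nat) + (if v = j then 1 else 0) := by
    intro v
    by_cases h1 : v = i
    · subst h1
      rw [fi, if_pos rfl, if_neg hij]
      omega
    · by_cases h2 : v = j
      · subst h2
        rw [fj, if_pos rfl, if_neg h1]
      · rw [fv v h1 h2, if_neg h1, if_neg h2]
  have hsum := Finset.sum_congr (rfl : (Finset.univ : Finset (Fin Q)) = Finset.univ)
    (fun v _ => hpt v)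
  rw [Finset.sum_add_distrib, Finset.sum_add_distrib, x.2] at hsum
  simp only [Finset.sum_ite_eq', Finset.mem_univ, if_true] at hsum
  exact ⟨⟨f, by omega⟩, by dsimp only; omega, fj, fv⟩

lemma loadWeight_pos {Q kap n : Nat} (x : LoadState Q kap n) : 0 < loadWeight Q kap n x := by
  unfold loadWeight
  exact Finset.prod_pos fun v _ => by positivity

/-- An exchange step that brings `x` and `xt` closer at `i` and at `j` does not decrease the
product of weights; the comparison is made factor by factor. -/
lemma loadWeight_mul_le {Q kap n : Nat} (x xt y yt : LoadState Q kap n) (i j : Fin Q)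
    (hi : (xt.1 i : Nat) < (x.1 i : Nat)) (hj : (x.1 j : Nat) < (xt.1 j : Nat))
    (hy : (y.1 i : Nat) + 1 = (x.1 i : Nat) ∧ (y.1 j : Nat) = (x.1 j : Nat) + 1 ∧
      ∀ v, v ≠ i → v ≠ j → y.1 v = x.1 v)
    (hyt : (yt.1 j : Nat) + 1 = (xt.1 j : Nat) ∧ (yt.1 i : Nat) = (xt.1 i : Nat) + 1 ∧
      ∀ v, v ≠ i → v ≠ j → yt.1 v = xt.1 v) :
    loadWeight Q kap n x * loadWeight Q kap n xt ≤
      loadWeight Q kap n y * loadWeight Q kap n yt := by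
  obtain ⟨y1, y2, y3⟩ := hy
  obtain ⟨z1, z2, z3⟩ := hyt
  unfold loadWeight
  rw [← Finset.prod_mul_distrib, ← Finset.prod_mul_distrib]
  refine Finset.prod_le_prod (fun v _ => by positivity) fun v _ => ?_
  by_cases h1 : v = i
  · subst h1
    rw [← y1, z2]
    exact factorial_weight_exchange kap _ _ (by omega) (by omega)
  · by_cases h2 : v = j
    · subst h2
      rw [y2, ← z1, mul_comm, mul_comm (1 / (((x.1 v : Nat) + 1).factorial * _ : Real))]
      exact factorial_weight_exchange kap _ _ (by omega) (by omega)
    · rw [y3 v h1 h2, z3 v h1 h2]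

/-- the stationary distribution `pi_n` of the load profile chain is
log M-concave. -/
theorem statement19 (Q : Nat) (hQ : 2 ≤ Q) (kap n : Nat) (hkap : 0 < kap) (hn : 0 < n)
    (hnN : n ≤ kap * Q) :
    ∀ xi xit : LoadState Q kap n, ∀ i : Fin Q, (xit.1 i : Nat) < (xi.1 i : Nat) →
      ∃ j : Fin Q, (xi.1 j : Nat) < (xit.1 j : Nat) ∧
        ∃ eta etat : LoadState Q kap n,
          ((eta.1 i : Nat) + 1 = (xi.1 i : Nat) ∧ (eta.1 j : Nat) = (xi.1 j : Nat) + 1 ∧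
            (∀ v, v ≠ i → v ≠ j → eta.1 v = xi.1 v)) ∧
          ((etat.1 j : Nat) + 1 = (xit.1 j : Nat) ∧ (etat.1 i : Nat) = (xit.1 i : Nat) + 1 ∧
            (∀ v, v ≠ i → v ≠ j → etat.1 v = xit.1 v)) ∧
          Real.log (loadPi Q kap n xi) + Real.log (loadPi Q kap n xit)
            ≤ Real.log (loadPi Q kap n eta) + Real.log (loadPi Q kap n etat) := by
  intro xi xit i hi
  obtain ⟨j, hj⟩ : ∃ j : Fin Q, (xi.1 j : Nat) < (xit.1 j : Nat) := by
    by_contra! hcon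
    have := Finset.sum_lt_sum (fun v (_ : v ∈ Finset.univ) => hcon v) ⟨i, Finset.mem_univ i, hi⟩
    rw [xi.2, xit.2] at this
    exact lt_irrefl _ this
  have hij : i ≠ j := by
    rintro rfl
    omega
  obtain ⟨eta, heta⟩ := exists_move xi i j hij (by omega) (by omega)
  obtain ⟨etat, h1, h2, h3⟩ := exists_move xit j i hij.symm (by omega) (by omega)
  have hetat := And.intro h1 (And.intro h2 fun v hvi hvj => h3 v hvj hvi)
  refine ⟨j, hj, eta, etat, heta, hetat, ?_⟩
  have hZ : 0 < ∑ x : LoadState Q kap n, loadWeight Q kap n x :=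
    Finset.sum_pos (fun x _ => loadWeight_pos x) ⟨xi, Finset.mem_univ xi⟩
  have hpos : ∀ x : LoadState Q kap n, 0 < loadPi Q kap n x :=
    fun x => div_pos (loadWeight_pos x) hZ
  rw [← Real.log_mul (hpos _).ne' (hpos _).ne', ← Real.log_mul (hpos _).ne' (hpos _).ne']
  refine Real.log_le_log (mul_pos (hpos _) (hpos _)) ?_
  unfold loadPi
  rw [div_mul_div_comm, div_mul_div_comm]
  exact div_le_div_of_nonneg_right (loadWeight_mul_le xi xit eta etat i j hi hj heta hetat)
    (mul_pos hZ hZ).le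

end CongestionPaper
end
end
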